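/- The generalized Lévy operator L acts as a Fourier multiplier: for every f in the Schwartz space of ℝ^d and every ξ ∈ ℝ^d, the Fourier transform satisfies (Lf)^(ξ) = a(ξ) · f̂(ξ), where a is the symbol a(ξ) = (−1)^{l+1} ∫_{ℝ^d} ( cos⟨y,ξ⟩ − Σ_{j=0}^{l} (−1)^j ⟨y,ξ⟩^{2j}/(2j)! ) h(y)|y|^{−(2l+1+α)} dy (with the convention f̂(ξ) = ∫ f(x) e^{−i⟨x,ξ⟩} dx; for other Fourier normalizations the same identity holds with a evaluated at the correspondingly rescaled frequency). -/

import Mathlib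

open scoped BigOperators
open MeasureTheory

noncomputable section

/-- The compensated integrand `f(x+y) − f(x) − Σ_{i=1}^{2l} (1/i!) Dⁱf(x)[y,…,y]`. -/
def levyIntegrand {d : ℕ} (l : ℕ) (f : EuclideanSpace ℝ (Fin d) → ℝ)
    (x y : EuclideanSpace ℝ (Fin d)) : ℝ :=
  f (x + y) - f x - ∑ i ∈ Finset.Icc 1 (2 * l),
    (1 / (i.factorial : ℝ)) * iteratedFDeriv ℝ i f x (fun _ => y)

/-- The density `h(y)|y|^{−(2l+1+α)}` of the Lévy measure. -/
def levyWeight {d : ℕ} (l : ℕ) (α : ℝ) (h : EuclideanSpace ℝ (Fin d) → ℝ)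
    (y : EuclideanSpace ℝ (Fin d)) : ℝ :=
  h y * ‖y‖ ^ (-(2 * (l : ℝ) + 1 + α))

/-- The generalized Lévy operator
`Lf(x) = (−1)^{l+1} ∫ (f(x+y) − f(x) − Σ_{i=1}^{2l} (1/i!) Dⁱf(x)[y,…,y]) h(y)|y|^{−(2l+1+α)} dy`. -/
def levyOp {d : ℕ} (l : ℕ) (α : ℝ) (h : EuclideanSpace ℝ (Fin d) → ℝ)
    (f : EuclideanSpace ℝ (Fin d) → ℝ) (x : EuclideanSpace ℝ (Fin d)) : ℝ :=
  (-1 : ℝ) ^ (l + 1) * ∫ y, levyIntegrand l f x y * levyWeight l α h y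

/-- The Fourier transform with the convention `f̂(ξ) = ∫ f(x) e^{−i⟨x,ξ⟩} dx`. -/
def ft {d : ℕ} (f : EuclideanSpace ℝ (Fin d) → ℝ) (ξ : EuclideanSpace ℝ (Fin d)) : ℂ :=
  ∫ x, (f x : ℂ) * Complex.exp (-Complex.I * ((inner ℝ x ξ : ℝ) : ℂ))

/-- The symbol
`a(ξ) = (−1)^{l+1} ∫ (cos⟨y,ξ⟩ − Σ_{j=0}^{l} (−1)^j ⟨y,ξ⟩^{2j}/(2j)!) h(y)|y|^{−(2l+1+α)} dy`. -/
def levySymbol {d : ℕ} (l : ℕ) (α : ℝ) (h : EuclideanSpace ℝ (Fin d) → ℝ)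
    (ξ : EuclideanSpace ℝ (Fin d)) : ℝ :=
  (-1 : ℝ) ^ (l + 1) * ∫ y,
    (Real.cos (inner ℝ y ξ) - ∑ j ∈ Finset.range (l + 1),
      (-1 : ℝ) ^ j * (inner ℝ y ξ : ℝ) ^ (2 * j) / (2 * j).factorial) * levyWeight l α h y


lemma levyWeight_bound {d : ℕ} (l : ℕ) (α : ℝ) (hα : α ∈ Set.Ioo (-1 : ℝ) 0)
    (h : EuclideanSpace ℝ (Fin d) → ℝ) (hpos : ∀ y, 0 ≤ h y)
    (M : ℝ) (hbd : ∀ y, h y ≤ M)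
    (R : ℝ) (hR : 0 < R) (hvan : ∀ y : EuclideanSpace ℝ (Fin d), R < ‖y‖ → h y = 0)
    (y : EuclideanSpace ℝ (Fin d)) :
    ‖y‖ ^ (2 * l + 1) * |levyWeight l α h y| ≤
      (Metric.closedBall (0 : EuclideanSpace ℝ (Fin d)) R).indicator
        (fun _ => M * R ^ (-α)) y := by
  have hM : 0 ≤ M := (hpos 0).trans (hbd 0)
  by_cases hy : ‖y‖ ≤ R
  · rw [Set.indicator_of_mem (by simpa using hy)]
    rcases eq_or_ne y 0 with rfl | hy0
    · simp; positivity
    · have hn : 0 < ‖y‖ := norm_pos_iff.2 hy0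
      unfold levyWeight
      rw [abs_of_nonneg (mul_nonneg (hpos y) (by positivity))]
      have e : ‖y‖ ^ (2 * l + 1) * ‖y‖ ^ (-(2 * (l : ℝ) + 1 + α)) = ‖y‖ ^ (-α) := by
        rw [← Real.rpow_natCast, ← Real.rpow_add hn]
        congr 1; push_cast; ring
      calc ‖y‖ ^ (2 * l + 1) * (h y * ‖y‖ ^ (-(2 * (l : ℝ) + 1 + α)))
          = h y * ‖y‖ ^ (-α) := by rw [← e]; ring
        _ ≤ M * R ^ (-α) := by
          apply mul_le_mul (hbd y) _ (by positivity) hM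
          exact Real.rpow_le_rpow hn.le hy (by linarith [hα.2])
  · rw [Set.indicator_of_notMem (by simpa using hy)]
    simp [levyWeight, hvan y (not_le.1 hy)]

lemma measurable_levyWeight {d : ℕ} (l : ℕ) (α : ℝ)
    (h : EuclideanSpace ℝ (Fin d) → ℝ) (hmeas : Measurable h) :
    Measurable (levyWeight l α h) := by
  unfold levyWeight
  fun_prop

lemma continuous_levyIntegrand {d : ℕ} (l : ℕ) (f : SchwartzMap (EuclideanSpace ℝ (Fin d)) ℝ) :
    Continuous (fun p : EuclideanSpace ℝ (Fin d) × EuclideanSpace ℝ (Fin d) =>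
      levyIntegrand l f p.1 p.2) := by
  unfold levyIntegrand
  have h1 : ∀ i : ℕ, Continuous (iteratedFDeriv ℝ i f) := fun i =>
    (f.smooth ⊤).continuous_iteratedFDeriv (mod_cast le_top)
  have h2 := f.continuous
  refine Continuous.sub (by fun_prop) (continuous_finsetSum _ fun i _ => ?_)
  refine continuous_const.mul ?_
  have h3 := h1 i
  exact Continuous.eval (by fun_prop) (by fun_prop)

lemma levyIntegrand_eq {d : ℕ} (l : ℕ) (f : EuclideanSpace ℝ (Fin d) → ℝ)
    (x y : EuclideanSpace ℝ (Fin d)) : levyIntegrand l f x y = f (x + y) -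
      ∑ i ∈ Finset.range (2 * l + 1),
        ((i.factorial : ℝ))⁻¹ * iteratedFDeriv ℝ i f x (fun _ => y) := by
  unfold levyIntegrand
  rw [Finset.range_eq_Ico, Finset.sum_eq_sum_Ico_succ_bot (by omega)]
  simp only [Nat.factorial_zero, Nat.cast_one, inv_one, iteratedFDeriv_zero_apply, one_mul,
    one_div]
  rw [show Finset.Ico (0 + 1) (2 * l + 1) = Finset.Icc 1 (2 * l) by ext; simp]
  ring

lemma levyIntegrand_bound {d : ℕ} (l : ℕ) (f : SchwartzMap (EuclideanSpace ℝ (Fin d)) ℝ)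
    (R : ℝ) (hR : 0 < R) : ∃ C : ℝ, 0 ≤ C ∧ ∀ x y : EuclideanSpace ℝ (Fin d), ‖y‖ ≤ R →
      |levyIntegrand l f x y| ≤ C * (1 + ‖x‖) ^ (-((d + 1 : ℕ) : ℝ)) * ‖y‖ ^ (2 * l + 1) := by
  set S := 2 ^ (d + 1) * (Finset.Iic (d + 1, 2 * l + 1)).sup
    (fun m => SchwartzMap.seminorm ℝ m.1 m.2) f with hS
  have hdec : ∀ z, (1 + ‖z‖) ^ (d + 1) * ‖iteratedFDeriv ℝ (2 * l + 1) f z‖ ≤ S := fun z =>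
    SchwartzMap.one_add_le_sup_seminorm_apply (𝕜 := ℝ) (m := (d + 1, 2 * l + 1)) le_rfl le_rfl f z
  have hS0 : 0 ≤ S := le_trans (by positivity) (hdec 0)
  refine ⟨(1 + R) ^ (d + 1) * S, by positivity, fun x y hy => ?_⟩
  have hT := map_add_eq_sum_add_integral_iteratedFDeriv (f := f) (x := x) (y := y) (n := 2 * l)
    (fun t _ => (f.smooth _).contDiffAt)
  have hE : levyIntegrand l f x y = ((2 * l).factorial : ℝ)⁻¹ * ∫ t in (0:ℝ)..1,
      (1 - t) ^ (2 * l) • iteratedFDeriv ℝ (2 * l + 1) f (x + t • y) (fun _ ↦ y) := by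
    rw [levyIntegrand_eq, hT]
    simp
  have hI : ‖∫ t in (0:ℝ)..1,
      (1 - t) ^ (2 * l) • iteratedFDeriv ℝ (2 * l + 1) f (x + t • y) (fun _ ↦ y)‖ ≤
      ((1 + R) ^ (d + 1) * S * (1 + ‖x‖) ^ (-((d + 1 : ℕ) : ℝ)) * ‖y‖ ^ (2 * l + 1))
        * |(1:ℝ) - 0| := by
    apply intervalIntegral.norm_integral_le_of_norm_le_const
    intro t ht
    rw [Set.uIoc_of_le zero_le_one] at ht
    obtain ⟨ht0, ht1⟩ := ht
    rw [norm_smul]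
    have a1 : ‖(1 - t) ^ (2 * l)‖ ≤ 1 := by
      rw [norm_pow]
      apply pow_le_one₀ (norm_nonneg _)
      rw [Real.norm_eq_abs, abs_le]; constructor <;> linarith
    have a2 : ‖iteratedFDeriv ℝ (2 * l + 1) f (x + t • y) (fun _ ↦ y)‖ ≤
        ‖iteratedFDeriv ℝ (2 * l + 1) f (x + t • y)‖ * ‖y‖ ^ (2 * l + 1) := by
      simpa using (iteratedFDeriv ℝ (2 * l + 1) f (x + t • y)).le_opNorm (fun _ ↦ y)
    have a3 : 1 + ‖x‖ ≤ (1 + R) * (1 + ‖x + t • y‖) := by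
      have b1 : ‖x‖ ≤ ‖x + t • y‖ + ‖t • y‖ := by
        simpa using norm_sub_le (x + t • y) (t • y)
      have b2 : ‖t • y‖ ≤ R := by
        rw [norm_smul, Real.norm_of_nonneg ht0.le]
        calc t * ‖y‖ ≤ 1 * R := by gcongr
          _ = R := one_mul _
      nlinarith [norm_nonneg (x + t • y)]
    have a4 : ‖iteratedFDeriv ℝ (2 * l + 1) f (x + t • y)‖ ≤
        (1 + R) ^ (d + 1) * S * (1 + ‖x‖) ^ (-((d + 1 : ℕ) : ℝ)) := by
      rw [Real.rpow_neg (by positivity), Real.rpow_natCast, ← div_eq_mul_inv,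
        le_div_iff₀ (by positivity)]
      calc ‖iteratedFDeriv ℝ (2 * l + 1) f (x + t • y)‖ * (1 + ‖x‖) ^ (d + 1)
          ≤ ‖iteratedFDeriv ℝ (2 * l + 1) f (x + t • y)‖ *
              ((1 + R) * (1 + ‖x + t • y‖)) ^ (d + 1) := by gcongr
        _ = (1 + R) ^ (d + 1) * ((1 + ‖x + t • y‖) ^ (d + 1) *
              ‖iteratedFDeriv ℝ (2 * l + 1) f (x + t • y)‖) := by rw [mul_pow]; ring
        _ ≤ (1 + R) ^ (d + 1) * S := by gcongr; exact hdec _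
    calc _ ≤ 1 * (‖iteratedFDeriv ℝ (2 * l + 1) f (x + t • y)‖ * ‖y‖ ^ (2 * l + 1)) := by
          gcongr
      _ ≤ _ := by rw [one_mul]; gcongr
  rw [hE, abs_mul]
  have hf1 : |((2 * l).factorial : ℝ)⁻¹| ≤ 1 := by
    rw [abs_of_nonneg (by positivity)]
    exact inv_le_one_of_one_le₀ (by exact_mod_cast Nat.succ_le_of_lt (Nat.factorial_pos _))
  rw [Real.norm_eq_abs, sub_zero, abs_one, mul_one] at hI
  calc _ ≤ 1 * _ := mul_le_mul hf1 hI (abs_nonneg _) zero_le_one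
    _ = _ := one_mul _

lemma integrable_schwartz_exp {d : ℕ} (f : SchwartzMap (EuclideanSpace ℝ (Fin d)) ℝ)
    (ξ : EuclideanSpace ℝ (Fin d)) :
    Integrable (fun x => (f x : ℂ) * Complex.exp (-Complex.I * ((inner ℝ x ξ : ℝ) : ℂ))) := by
  refine (f.integrable (μ := volume)).ofReal.mul_bdd (c := 1) ?_ ?_
  · exact Continuous.aestronglyMeasurable (by fun_prop)
  · refine Filter.Eventually.of_forall fun x => le_of_eq ?_
    rw [show -Complex.I * ((inner ℝ x ξ : ℝ) : ℂ) = ((-(inner ℝ x ξ : ℝ) : ℝ) : ℂ) * Complex.I by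
      push_cast; ring]
    exact Complex.norm_exp_ofReal_mul_I _

open LineDeriv in
lemma ft_lineDeriv {d : ℕ} (f : SchwartzMap (EuclideanSpace ℝ (Fin d)) ℝ)
    (y ξ : EuclideanSpace ℝ (Fin d)) :
    ft (⇑(∂_{y} f : SchwartzMap (EuclideanSpace ℝ (Fin d)) ℝ)) ξ = (Complex.I * ((inner ℝ y ξ : ℝ) : ℂ)) * ft f ξ := by
  have hg : ∀ x : EuclideanSpace ℝ (Fin d), HasLineDerivAt ℝ (fun x : EuclideanSpace ℝ (Fin d) =>
      Complex.exp (-Complex.I * ((inner ℝ x ξ : ℝ) : ℂ)))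
      (Complex.exp (-Complex.I * ((inner ℝ x ξ : ℝ) : ℂ)) *
        (-Complex.I * ((inner ℝ y ξ : ℝ) : ℂ))) x y := by
    intro x
    unfold HasLineDerivAt
    have : HasDerivAt (fun t : ℝ => -Complex.I * ((inner ℝ (x + t • y) ξ : ℝ) : ℂ))
        (-Complex.I * ((inner ℝ y ξ : ℝ) : ℂ)) 0 := by
      have e : (fun t : ℝ => (inner ℝ (x + t • y) ξ : ℝ)) =
          fun t => inner ℝ x ξ + t * inner ℝ y ξ := by
        ext t; rw [inner_add_left, inner_smul_left]; simp
      have : HasDerivAt (fun t : ℝ => (inner ℝ (x + t • y) ξ : ℝ)) (inner ℝ y ξ) 0 := by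
        rw [e]
        simpa using ((hasDerivAt_id (0:ℝ)).mul_const (inner ℝ y ξ : ℝ)).const_add (inner ℝ x ξ : ℝ)
      exact this.ofReal_comp.const_mul _
    simpa using this.cexp
  have hf : ∀ x : EuclideanSpace ℝ (Fin d), HasLineDerivAt ℝ (fun x => (f x : ℂ))
      ((∂_{y} f x : ℝ) : ℂ) x y := by
    intro x
    have := (f.differentiableAt (x := x)).hasFDerivAt.hasLineDerivAt y
    rw [← SchwartzMap.lineDerivOp_apply_eq_fderiv] at this
    exact HasDerivAt.ofReal_comp this
  have key := integral_bilinear_hasLineDerivAt_right_eq_neg_left_of_integrable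
    (μ := (volume : Measure (EuclideanSpace ℝ (Fin d)))) (B := ContinuousLinearMap.mul ℝ ℂ)
    (v := y) (hf'g := by simpa using integrable_schwartz_exp (∂_{y} f) ξ)
    (hfg' := by simpa [mul_assoc] using
      (integrable_schwartz_exp f ξ).mul_const (-Complex.I * ((inner ℝ y ξ : ℝ) : ℂ)))
    (hfg := by simpa using integrable_schwartz_exp f ξ) (fun x _ => hf x) (fun x _ => hg x)
  simp only [ContinuousLinearMap.mul_apply', ← mul_assoc] at key
  simp only [mul_assoc] at key
  unfold ft
  simp only [← mul_assoc, integral_mul_const] at key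
  linear_combination key

open LineDeriv in
lemma ft_iteratedFDeriv {d : ℕ} (f : SchwartzMap (EuclideanSpace ℝ (Fin d)) ℝ)
    (y ξ : EuclideanSpace ℝ (Fin d)) (n : ℕ) :
    Integrable (fun x => ((iteratedFDeriv ℝ n f x (fun _ => y) : ℝ) : ℂ) *
      Complex.exp (-Complex.I * ((inner ℝ x ξ : ℝ) : ℂ))) ∧
    ∫ x, ((iteratedFDeriv ℝ n f x (fun _ => y) : ℝ) : ℂ) *
      Complex.exp (-Complex.I * ((inner ℝ x ξ : ℝ) : ℂ)) =
      (Complex.I * ((inner ℝ y ξ : ℝ) : ℂ)) ^ n * ft f ξ := by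
  simp only [← SchwartzMap.iteratedLineDerivOp_eq_iteratedFDeriv,
    LineDeriv.iteratedLineDerivOp_const_eq_iter_lineDerivOp]
  refine ⟨integrable_schwartz_exp _ ξ, ?_⟩
  change ft _ ξ = _
  induction n with
  | zero => simp
  | succ n ih =>
    rw [Function.iterate_succ_apply', ft_lineDeriv, ih, pow_succ]; ring

lemma ft_translate {d : ℕ} (f : SchwartzMap (EuclideanSpace ℝ (Fin d)) ℝ)
    (y ξ : EuclideanSpace ℝ (Fin d)) :
    Integrable (fun x => ((f (x + y) : ℝ) : ℂ) *
      Complex.exp (-Complex.I * ((inner ℝ x ξ : ℝ) : ℂ))) ∧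
    ∫ x, ((f (x + y) : ℝ) : ℂ) *
      Complex.exp (-Complex.I * ((inner ℝ x ξ : ℝ) : ℂ)) =
      Complex.exp (Complex.I * ((inner ℝ y ξ : ℝ) : ℂ)) * ft f ξ := by
  have e : (fun x => ((f (x + y) : ℝ) : ℂ) *
      Complex.exp (-Complex.I * ((inner ℝ x ξ : ℝ) : ℂ))) = fun x =>
      Complex.exp (Complex.I * ((inner ℝ y ξ : ℝ) : ℂ)) *
      (fun z => (f z : ℂ) * Complex.exp (-Complex.I * ((inner ℝ z ξ : ℝ) : ℂ))) (x + y) := by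
    ext x
    simp only [inner_add_left]
    rw [mul_left_comm, ← Complex.exp_add]
    congr 2; push_cast; ring
  rw [e]
  refine ⟨((integrable_schwartz_exp f ξ).comp_add_right y).const_mul _, ?_⟩
  rw [integral_const_mul, integral_add_right_eq_self (μ := volume)
    (fun z => (f z : ℂ) * Complex.exp (-Complex.I * ((inner ℝ z ξ : ℝ) : ℂ)))]
  rfl

/-- The uncompensated complex symbol. -/
def cSym {d : ℕ} (l : ℕ) (ξ y : EuclideanSpace ℝ (Fin d)) : ℂ :=
  Complex.exp (Complex.I * ((inner ℝ y ξ : ℝ) : ℂ)) -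
    ∑ i ∈ Finset.range (2 * l + 1), (Complex.I * ((inner ℝ y ξ : ℝ) : ℂ)) ^ i / (i.factorial : ℂ)

lemma ft_levyIntegrand {d : ℕ} (l : ℕ) (f : SchwartzMap (EuclideanSpace ℝ (Fin d)) ℝ)
    (y ξ : EuclideanSpace ℝ (Fin d)) :
    ∫ x, ((levyIntegrand l f x y : ℝ) : ℂ) *
      Complex.exp (-Complex.I * ((inner ℝ x ξ : ℝ) : ℂ)) = cSym l ξ y * ft f ξ := by
  have e : (fun x => ((levyIntegrand l f x y : ℝ) : ℂ) *
      Complex.exp (-Complex.I * ((inner ℝ x ξ : ℝ) : ℂ))) = fun x =>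
      ((f (x + y) : ℝ) : ℂ) * Complex.exp (-Complex.I * ((inner ℝ x ξ : ℝ) : ℂ)) -
      ∑ i ∈ Finset.range (2 * l + 1), ((i.factorial : ℂ))⁻¹ *
        (((iteratedFDeriv ℝ i f x (fun _ => y) : ℝ) : ℂ) *
          Complex.exp (-Complex.I * ((inner ℝ x ξ : ℝ) : ℂ))) := by
    ext x
    rw [levyIntegrand_eq]
    push_cast
    rw [sub_mul, Finset.sum_mul]
    simp only [mul_assoc]
  rw [e, integral_sub (ft_translate f y ξ).1
    (integrable_finsetSum _ fun i _ => (ft_iteratedFDeriv f y ξ i).1.const_mul _),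
    integral_finsetSum _ fun i _ => (ft_iteratedFDeriv f y ξ i).1.const_mul _,
    (ft_translate f y ξ).2]
  simp only [integral_const_mul, (ft_iteratedFDeriv f y ξ _).2]
  unfold cSym
  rw [sub_mul, Finset.sum_mul]
  congr 1
  refine Finset.sum_congr rfl fun i _ => by ring

lemma cSym_add_neg {d : ℕ} (l : ℕ) (ξ y : EuclideanSpace ℝ (Fin d)) :
    cSym l ξ y + cSym l ξ (-y) = 2 * ((Real.cos (inner ℝ y ξ) - ∑ j ∈ Finset.range (l + 1),
      (-1 : ℝ) ^ j * (inner ℝ y ξ : ℝ) ^ (2 * j) / (2 * j).factorial : ℝ) : ℂ) := by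
  unfold cSym
  simp only [inner_neg_left]
  generalize (inner ℝ y ξ : ℝ) = t
  have h1 : Complex.exp (Complex.I * (t : ℂ)) + Complex.exp (Complex.I * ((-t : ℝ) : ℂ))
      = 2 * ((Real.cos t : ℝ) : ℂ) := by
    rw [Complex.ofReal_cos, Complex.two_cos]; push_cast; ring_nf
  have h2 : ∀ m : ℕ, ∑ i ∈ Finset.range (2 * m + 1), (Complex.I * (t : ℂ)) ^ i / (i.factorial : ℂ) +
      ∑ i ∈ Finset.range (2 * m + 1), (Complex.I * ((-t : ℝ) : ℂ)) ^ i / (i.factorial : ℂ) =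
      2 * ((∑ j ∈ Finset.range (m + 1),
        (-1 : ℝ) ^ j * t ^ (2 * j) / (2 * j).factorial : ℝ) : ℂ) := by
    intro m
    induction m with
    | zero => simp; norm_num
    | succ m ih =>
      rw [show 2 * (m + 1) + 1 = (2 * m + 1) + 1 + 1 by ring, Finset.sum_range_succ,
        Finset.sum_range_succ, Finset.sum_range_succ _ (2 * m + 1 + 1),
        Finset.sum_range_succ _ (2 * m + 1), Finset.sum_range_succ _ (m + 1),
        Complex.ofReal_add, mul_add, ← ih]
      have o : (Complex.I * ((-t : ℝ) : ℂ)) ^ (2 * m + 1) = - (Complex.I * (t : ℂ)) ^ (2 * m + 1) := by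
        rw [Complex.ofReal_neg, mul_neg, Odd.neg_pow ⟨m, rfl⟩]
      have ev : (Complex.I * (t : ℂ)) ^ (2 * m + 1 + 1) = (-1) ^ (m + 1) * (t:ℂ) ^ (2 * (m + 1)) := by
        rw [show 2 * m + 1 + 1 = 2 * (m + 1) by ring, mul_pow, pow_mul, Complex.I_sq]
      have ev' : (Complex.I * ((-t : ℝ) : ℂ)) ^ (2 * m + 1 + 1) =
          (-1) ^ (m + 1) * (t:ℂ) ^ (2 * (m + 1)) := by
        rw [← ev, Complex.ofReal_neg, mul_neg, Even.neg_pow ⟨m + 1, by ring⟩]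
      rw [o, ev, ev', show 2 * m + 1 + 1 = 2 * (m + 1) by ring]
      push_cast
      ring
  rw [Complex.ofReal_sub, mul_sub, ← h1, ← h2 l]
  ring

lemma cSym_bound {d : ℕ} (l : ℕ) (ξ y : EuclideanSpace ℝ (Fin d)) (R : ℝ) (hy : ‖y‖ ≤ R) :
    ‖cSym l ξ y‖ ≤ ‖ξ‖ ^ (2 * l + 1) * Real.exp (R * ‖ξ‖) * ‖y‖ ^ (2 * l + 1) := by
  have := Complex.norm_exp_sub_sum_le_norm_mul_exp
    (Complex.I * ((inner ℝ y ξ : ℝ) : ℂ)) (2 * l + 1)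
  have hn : ‖Complex.I * ((inner ℝ y ξ : ℝ) : ℂ)‖ ≤ ‖y‖ * ‖ξ‖ := by
    rw [norm_mul, Complex.norm_I, one_mul, Complex.norm_real]
    exact norm_inner_le_norm y ξ
  refine this.trans ?_
  calc _ ≤ (‖y‖ * ‖ξ‖) ^ (2 * l + 1) * Real.exp (R * ‖ξ‖) := by
        gcongr
        exact hn.trans (by gcongr)
    _ = _ := by rw [mul_pow]; ring

/-- the generalized Lévy operator acts as a Fourier multiplier on the
Schwartz space: `(Lf)^(ξ) = a(ξ) · f̂(ξ)`. -/
theorem levyOp_fourier_multiplier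
    (d l : ℕ) (α : ℝ) (hα : α ∈ Set.Ioo (-1 : ℝ) 0)
    (h : EuclideanSpace ℝ (Fin d) → ℝ)
    (hmeas : Measurable h) (hpos : ∀ y, 0 ≤ h y)
    (M : ℝ) (hbd : ∀ y, h y ≤ M)
    (hsymm : ∀ y, h (-y) = h y)
    (R : ℝ) (hR : 0 < R) (hvan : ∀ y : EuclideanSpace ℝ (Fin d), R < ‖y‖ → h y = 0)
    (f : SchwartzMap (EuclideanSpace ℝ (Fin d)) ℝ) (ξ : EuclideanSpace ℝ (Fin d)) :
    ft (levyOp l α h ⇑f) ξ = (levySymbol l α h ξ : ℂ) * ft (⇑f) ξ := by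
  have hwb := levyWeight_bound l α hα h hpos M hbd R hR hvan
  have hwm := measurable_levyWeight l α h hmeas
  have hw0 : ∀ y : EuclideanSpace ℝ (Fin d), R < ‖y‖ → levyWeight l α h y = 0 := by
    intro y hy; simp [levyWeight, hvan y hy]
  have hwneg : ∀ y, levyWeight l α h (-y) = levyWeight l α h y := by
    intro y; simp [levyWeight, hsymm]
  set ind := (Metric.closedBall (0 : EuclideanSpace ℝ (Fin d)) R).indicator
        (fun _ => M * R ^ (-α)) with hind
  have hindint : Integrable ind := by
    rw [hind, integrable_indicator_iff measurableSet_closedBall]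
    exact integrableOn_const (measure_closedBall_lt_top.ne)
  -- the double integral
  set F : EuclideanSpace ℝ (Fin d) → EuclideanSpace ℝ (Fin d) → ℂ := fun x y =>
    (((levyIntegrand l f x y : ℝ) : ℂ) *
      Complex.exp (-Complex.I * ((inner ℝ x ξ : ℝ) : ℂ))) * (levyWeight l α h y : ℂ) with hF
  have hFint : Integrable (Function.uncurry F) (volume.prod volume) := by
    obtain ⟨C, hC, hb⟩ := levyIntegrand_bound l f R hR
    have hx : Integrable (fun x : EuclideanSpace ℝ (Fin d) =>
        C * (1 + ‖x‖) ^ (-((d + 1 : ℕ) : ℝ))) := by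
      apply (integrable_one_add_norm (μ := volume) _).const_mul
      simp
    refine (hx.mul_prod hindint).mono' ?_ ?_
    · apply Measurable.aestronglyMeasurable
      have := (continuous_levyIntegrand l f).measurable
      simp only [hF, Function.uncurry_def]
      have h2 : Measurable (fun p : EuclideanSpace ℝ (Fin d) × EuclideanSpace ℝ (Fin d) =>
          Complex.exp (-Complex.I * ((inner ℝ p.1 ξ : ℝ) : ℂ))) :=
        Continuous.measurable (by fun_prop)
      exact (this.complex_ofReal.mul h2).mul (hwm.comp measurable_snd).complex_ofReal
    · refine Filter.Eventually.of_forall fun p => ?_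
      obtain ⟨x, y⟩ := p
      simp only [hF, Function.uncurry_apply_pair]
      rw [norm_mul, norm_mul, show -Complex.I * ((inner ℝ x ξ : ℝ) : ℂ) =
        ((-(inner ℝ x ξ : ℝ) : ℝ) : ℂ) * Complex.I by push_cast; ring,
        Complex.norm_exp_ofReal_mul_I, mul_one, Complex.norm_real, Complex.norm_real,
        Real.norm_eq_abs, Real.norm_eq_abs]
      by_cases hy : ‖y‖ ≤ R
      · calc _ ≤ C * (1 + ‖x‖) ^ (-((d + 1 : ℕ) : ℝ)) * ‖y‖ ^ (2 * l + 1) *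
              |levyWeight l α h y| := by gcongr; exact hb x y hy
          _ = C * (1 + ‖x‖) ^ (-((d + 1 : ℕ) : ℝ)) * (‖y‖ ^ (2 * l + 1) *
              |levyWeight l α h y|) := by ring
          _ ≤ _ := by gcongr; exact hwb y
      · rw [hw0 y (not_le.1 hy), abs_zero, mul_zero]
        have : 0 ≤ ind y := le_trans (by positivity) (hwb y)
        positivity
  -- the symbol integrand
  have hGint : Integrable (fun y => cSym l ξ y * (levyWeight l α h y : ℂ)) := by
    refine (hindint.const_mul (‖ξ‖ ^ (2 * l + 1) * Real.exp (R * ‖ξ‖))).mono' ?_ ?_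
    · have : Measurable (cSym l ξ) := by
        unfold cSym
        exact Continuous.measurable (by fun_prop)
      exact (this.mul hwm.complex_ofReal).aestronglyMeasurable
    · refine Filter.Eventually.of_forall fun y => ?_
      rw [norm_mul, Complex.norm_real, Real.norm_eq_abs]
      by_cases hy : ‖y‖ ≤ R
      · calc _ ≤ ‖ξ‖ ^ (2 * l + 1) * Real.exp (R * ‖ξ‖) * ‖y‖ ^ (2 * l + 1) *
              |levyWeight l α h y| := by gcongr; exact cSym_bound l ξ y R hy
          _ = ‖ξ‖ ^ (2 * l + 1) * Real.exp (R * ‖ξ‖) * (‖y‖ ^ (2 * l + 1) *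
              |levyWeight l α h y|) := by ring
          _ ≤ _ := by gcongr; exact hwb y
      · rw [hw0 y (not_le.1 hy), abs_zero, mul_zero]
        have : 0 ≤ ind y := le_trans (by positivity) (hwb y)
        positivity
  have hsym : ∫ y, cSym l ξ y * (levyWeight l α h y : ℂ) =
      ((∫ y, (Real.cos (inner ℝ y ξ) - ∑ j ∈ Finset.range (l + 1),
      (-1 : ℝ) ^ j * (inner ℝ y ξ : ℝ) ^ (2 * j) / (2 * j).factorial) *
        levyWeight l α h y : ℝ) : ℂ) := by
    have h1 : ∫ y, cSym l ξ (-y) * (levyWeight l α h (-y) : ℂ) =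
        ∫ y, cSym l ξ y * (levyWeight l α h y : ℂ) :=
      integral_neg_eq_self (fun y => cSym l ξ y * (levyWeight l α h y : ℂ)) volume
    have h2 := integral_add hGint hGint.comp_neg
    rw [h1] at h2
    rw [← integral_complex_ofReal]
    have h3 : ∫ y, (cSym l ξ y * (levyWeight l α h y : ℂ) +
        cSym l ξ (-y) * (levyWeight l α h (-y) : ℂ)) =
        2 * ∫ y, (((Real.cos (inner ℝ y ξ) - ∑ j ∈ Finset.range (l + 1),
      (-1 : ℝ) ^ j * (inner ℝ y ξ : ℝ) ^ (2 * j) / (2 * j).factorial) *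
        levyWeight l α h y : ℝ) : ℂ) := by
      rw [← integral_const_mul]
      congr 1
      ext y
      rw [hwneg, ← add_mul, cSym_add_neg, Complex.ofReal_mul, mul_assoc]
    rw [h3] at h2
    linear_combination -h2 / 2
  calc ft (levyOp l α h ⇑f) ξ = (-1 : ℂ) ^ (l + 1) * ∫ x, ∫ y, F x y := by
        unfold ft levyOp
        rw [← integral_const_mul]
        congr 1
        ext x
        rw [Complex.ofReal_mul, ← integral_complex_ofReal, mul_assoc, ← integral_mul_const]
        push_cast
        congr 2
        ext y
        simp only [hF]
        ring
    _ = (-1 : ℂ) ^ (l + 1) * ∫ y, ∫ x, F x y := by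
        rw [integral_integral_swap hFint]
    _ = (-1 : ℂ) ^ (l + 1) * ((∫ y, cSym l ξ y * (levyWeight l α h y : ℂ)) * ft f ξ) := by
        rw [← integral_mul_const]
        congr 2
        ext y
        simp only [hF]
        rw [integral_mul_const, ft_levyIntegrand]
        ring
    _ = _ := by
        rw [hsym]
        unfold levySymbol
        push_cast
        ring
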